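/- Integration by parts for the mixed operator X^{xa}: let x : [0,T] → ℝ be continuously differentiable and let φ, ψ be Schwartz functions on ℝ^n. For 0 ≤ u ≤ t ≤ T and a bounded continuous function χ ∈ L^p(ℝ^n), write X^x_{tu} χ = ∫_u^t x'(v) (g_{t−v} * χ) dv (with g_0 * χ = χ). Then for all 0 ≤ s ≤ t ≤ T the following equality holds in L^p(ℝ^n): ∫_s^t x'(u) ( g_{t−u} * [ ((g_{u−s} * φ) − φ) · ψ ] ) du = ∫_s^t X^x_{tu}( ((∂g_{u−s}) * φ) · ψ ) du, where · denotes the pointwise product of functions on ℝ^n, the inner integrand on the right is taken for u ∈ (s,t), and all integrals are absolutely convergent Bochner integrals in L^p(ℝ^n). -/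

import Mathlib

open MeasureTheory Real
open scoped ENNReal

/-- The heat kernel on ℝ^n: `g_t(ξ) = (2πt)^(-n/2) exp(-|ξ|²/(2t))`. -/
noncomputable def heatKernel (n : ℕ) (t : ℝ) : EuclideanSpace ℝ (Fin n) → ℝ :=
  fun ξ => (2 * π * t) ^ (-(n : ℝ) / 2) * Real.exp (-‖ξ‖ ^ 2 / (2 * t))

/-- Time derivative of the heat kernel:
`∂g_t(ξ) = (2πt)^(-n/2) e^{-|ξ|²/(2t)} (|ξ|²/(2t²) - n/(2t))`. -/
noncomputable def heatKernelDt (n : ℕ) (t : ℝ) : EuclideanSpace ℝ (Fin n) → ℝ :=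
  fun ξ => (2 * π * t) ^ (-(n : ℝ) / 2) * Real.exp (-‖ξ‖ ^ 2 / (2 * t)) *
    (‖ξ‖ ^ 2 / (2 * t ^ 2) - (n : ℝ) / (2 * t))

/-- Convolution of two real functions on ℝ^n. -/
noncomputable def convol {n : ℕ} (f g : EuclideanSpace ℝ (Fin n) → ℝ) :
    EuclideanSpace ℝ (Fin n) → ℝ :=
  fun ξ => ∫ η, f η * g (ξ - η)

/-- Heat semigroup at the level of functions: `S_t φ = g_t * φ` for `t > 0`,
`S_0 = Id` (also for `t ≤ 0`). -/
noncomputable def heatS (n : ℕ) (t : ℝ) (φ : EuclideanSpace ℝ (Fin n) → ℝ) :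
    EuclideanSpace ℝ (Fin n) → ℝ :=
  if 0 < t then convol (heatKernel n t) φ else φ

open Set Filter Topology

theorem rpow_two_pi_mul (n : ℕ) {r : ℝ} (hr : 0 < r) :
    (2 * π * r) ^ (-(n : ℝ) / 2) = (√r ^ n)⁻¹ * (2 * π * 1) ^ (-(n : ℝ) / 2) := by
  rw [mul_one, mul_rpow (by positivity) hr.le, mul_comm]
  congr 1
  rw [sqrt_eq_rpow, ← rpow_natCast, ← rpow_mul hr.le, ← rpow_neg hr.le]
  congr 1
  ring

theorem heatKernel_sqrt_smul (n : ℕ) {r : ℝ} (hr : 0 < r) (y : EuclideanSpace ℝ (Fin n)) :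
    heatKernel n r (√r • y) = (√r ^ n)⁻¹ * heatKernel n 1 y := by
  have h : ‖√r • y‖ ^ 2 = r * ‖y‖ ^ 2 := by
    rw [norm_smul, mul_pow, norm_eq_abs, sq_abs, sq_sqrt hr.le]
  simp only [heatKernel, h, rpow_two_pi_mul n hr]
  rw [mul_assoc]
  congr 3
  field_simp

theorem heatKernelDt_sqrt_smul (n : ℕ) {r : ℝ} (hr : 0 < r) (y : EuclideanSpace ℝ (Fin n)) :
    heatKernelDt n r (√r • y) = (√r ^ n)⁻¹ * (r⁻¹ * heatKernelDt n 1 y) := by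
  have h : ‖√r • y‖ ^ 2 = r * ‖y‖ ^ 2 := by
    rw [norm_smul, mul_pow, norm_eq_abs, sq_abs, sq_sqrt hr.le]
  have h' : -(r * ‖y‖ ^ 2) / (2 * r) = -‖y‖ ^ 2 / (2 * 1) := by field_simp
  simp only [heatKernelDt, h, rpow_two_pi_mul n hr, h']
  field_simp

theorem integral_heatKernel_mul (n : ℕ) {r : ℝ} (hr : 0 < r)
    (F : EuclideanSpace ℝ (Fin n) → ℝ) :
    ∫ y, heatKernel n r y * F y = ∫ y, heatKernel n 1 y * F (√r • y) := by
  have hs : 0 < √r ^ n := by positivity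
  have h := Measure.integral_comp_smul volume (fun y => heatKernel n r y * F y) (√r)
  simp only [heatKernel_sqrt_smul n hr, finrank_euclideanSpace_fin, mul_assoc,
    integral_const_mul, smul_eq_mul, abs_of_pos (inv_pos.2 hs)] at h
  exact (mul_left_cancel₀ (inv_pos.2 hs).ne' h).symm

theorem integral_abs_heatKernelDt_mul (n : ℕ) {r : ℝ} (hr : 0 < r)
    (F : EuclideanSpace ℝ (Fin n) → ℝ) :
    ∫ y, |heatKernelDt n r y| * F y = r⁻¹ * ∫ y, |heatKernelDt n 1 y| * F (√r • y) := by
  have hs : 0 < √r ^ n := by positivity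
  have h := Measure.integral_comp_smul volume (fun y => |heatKernelDt n r y| * F y) (√r)
  simp only [heatKernelDt_sqrt_smul n hr, finrank_euclideanSpace_fin, mul_assoc, abs_mul,
    integral_const_mul, smul_eq_mul, abs_of_pos (inv_pos.2 hs), abs_of_pos (inv_pos.2 hr)] at h
  exact (mul_left_cancel₀ (inv_pos.2 hs).ne' h).symm

theorem integrable_norm_pow_mul_exp {n : ℕ} (hn : 1 ≤ n) (k : ℕ) {b : ℝ} (hb : 0 < b) :
    Integrable fun y : EuclideanSpace ℝ (Fin n) => ‖y‖ ^ k * Real.exp (-b * ‖y‖ ^ 2) := by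
  have : Nonempty (Fin n) := ⟨⟨0, hn⟩⟩
  refine (integrable_fun_norm_addHaar volume
    (f := fun z : ℝ => z ^ k * Real.exp (-b * z ^ 2))).2 ?_
  refine (integrableOn_rpow_mul_exp_neg_mul_sq (s := ((n - 1 + k : ℕ) : ℝ)) hb
    (by linarith [(n - 1 + k).cast_nonneg (α := ℝ)])).congr_fun (fun z _ => ?_) measurableSet_Ioi
  simp only [finrank_euclideanSpace_fin, smul_eq_mul, rpow_natCast, pow_add, mul_assoc]

theorem integrable_heatKernel_mul_norm_pow {n : ℕ} (hn : 1 ≤ n) {r : ℝ} (hr : 0 < r) (k : ℕ) :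
    Integrable fun y : EuclideanSpace ℝ (Fin n) => heatKernel n r y * ‖y‖ ^ k := by
  refine ((integrable_norm_pow_mul_exp hn k (b := (2 * r)⁻¹) (by positivity)).const_mul
    ((2 * π * r) ^ (-(n : ℝ) / 2))).congr (ae_of_all _ fun y => ?_)
  simp only [heatKernel]
  rw [show -‖y‖ ^ 2 / (2 * r) = -(2 * r)⁻¹ * ‖y‖ ^ 2 by ring]
  ring

theorem integrable_heatKernelDt_mul_norm_pow {n : ℕ} (hn : 1 ≤ n) {r : ℝ} (hr : 0 < r) (k : ℕ) :
    Integrable fun y : EuclideanSpace ℝ (Fin n) => heatKernelDt n r y * ‖y‖ ^ k := by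
  refine (((integrable_heatKernel_mul_norm_pow hn hr (k + 2)).const_mul (2 * r ^ 2)⁻¹).sub
    ((integrable_heatKernel_mul_norm_pow hn hr k).const_mul (n / (2 * r)))).congr
    (ae_of_all _ fun y => ?_)
  simp only [heatKernel, heatKernelDt, Pi.sub_apply]
  ring

theorem integral_heatKernel {n : ℕ} {r : ℝ} (hr : 0 < r) :
    ∫ y, heatKernel n r y = 1 := by
  have h := GaussianFourier.integral_rexp_neg_mul_sq_norm (V := EuclideanSpace ℝ (Fin n))
    (b := (2 * r)⁻¹) (by positivity)
  simp only [heatKernel, integral_const_mul]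
  simp only [show ∀ y : EuclideanSpace ℝ (Fin n), -‖y‖ ^ 2 / (2 * r) = -(2 * r)⁻¹ * ‖y‖ ^ 2 from
    fun y => by ring, h, finrank_euclideanSpace_fin]
  rw [show π / (2 * r)⁻¹ = 2 * π * r by field_simp, ← rpow_add (by positivity)]
  simp [neg_div]

theorem integral_heatKernelDt {n : ℕ} (hn : 1 ≤ n) {r : ℝ} (hr : 0 < r) :
    ∫ y, heatKernelDt n r y = 0 := by
  have : Nonempty (Fin n) := ⟨⟨0, hn⟩⟩
  have h0 := integral_fun_norm_addHaar (volume : Measure (EuclideanSpace ℝ (Fin n)))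
    (fun z => Real.exp (-(2 * r)⁻¹ * z ^ (2 : ℝ)))
  have h2 := integral_fun_norm_addHaar (volume : Measure (EuclideanSpace ℝ (Fin n)))
    (fun z => z ^ 2 * Real.exp (-(2 * r)⁻¹ * z ^ (2 : ℝ)))
  have key : ∀ q : ℕ, ∫ x in Ioi (0 : ℝ), x ^ q * Real.exp (-(2 * r)⁻¹ * x ^ (2 : ℝ)) =
      (2 * r)⁻¹ ^ (-((q : ℝ) + 1) / 2) * (1 / 2) * Real.Gamma (((q : ℝ) + 1) / 2) := fun q => by
    rw [← integral_rpow_mul_exp_neg_mul_rpow two_pos (by linarith [q.cast_nonneg (α := ℝ)])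
      (by positivity)]
    simp
  simp only [finrank_euclideanSpace_fin, smul_eq_mul, ← mul_assoc, ← pow_add, key] at h0 h2
  obtain ⟨m, rfl⟩ : ∃ m, n = m + 1 := ⟨n - 1, by omega⟩
  have e : ∀ y : EuclideanSpace ℝ (Fin (m + 1)), heatKernelDt (m + 1) r y =
      (2 * π * r) ^ (-((m + 1 : ℕ) : ℝ) / 2) * (2 * r ^ 2)⁻¹ *
        (‖y‖ ^ 2 * Real.exp (-(2 * r)⁻¹ * ‖y‖ ^ (2 : ℝ))) -
      (2 * π * r) ^ (-((m + 1 : ℕ) : ℝ) / 2) * (((m + 1 : ℕ) : ℝ) / (2 * r)) *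
        Real.exp (-(2 * r)⁻¹ * ‖y‖ ^ (2 : ℝ)) := fun y => by
    simp only [heatKernelDt, rpow_two]
    rw [show -‖y‖ ^ 2 / (2 * r) = -(2 * r)⁻¹ * ‖y‖ ^ 2 by ring]
    ring
  have i0 := integrable_norm_pow_mul_exp hn 0 (b := (2 * r)⁻¹) (by positivity)
  have i2 := integrable_norm_pow_mul_exp hn 2 (b := (2 * r)⁻¹) (by positivity)
  simp only [pow_zero, one_mul] at i0
  simp only [e]
  rw [integral_sub ((by simpa only [rpow_two] using i2 : Integrable _ _).const_mul _)
    ((by simpa only [rpow_two] using i0 : Integrable _ _).const_mul _),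
    integral_const_mul, integral_const_mul, h0, h2]
  have g : Real.Gamma ((((m + 1 - 1 + 2 : ℕ) : ℝ) + 1) / 2) =
      (((m : ℝ) + 1) / 2) * Real.Gamma (((m : ℝ) + 1) / 2) := by
    rw [← Real.Gamma_add_one (by positivity)]
    congr 1
    push_cast [Nat.add_sub_cancel]
    ring
  have g' : (2 * r)⁻¹ ^ (-(((m + 1 - 1 + 2 : ℕ) : ℝ) + 1) / 2) =
      (2 * r)⁻¹ ^ (-((m : ℝ) + 1) / 2) * (2 * r) := by
    rw [show -(((m + 1 - 1 + 2 : ℕ) : ℝ) + 1) / 2 = -((m : ℝ) + 1) / 2 - 1 by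
      push_cast [Nat.add_sub_cancel]; ring, rpow_sub_one (by positivity), div_inv_eq_mul]
  rw [g, g', Nat.add_sub_cancel]
  push_cast
  field_simp
  ring

theorem heatKernel_nonneg (n : ℕ) {r : ℝ} (hr : 0 ≤ r) (y : EuclideanSpace ℝ (Fin n)) :
    0 ≤ heatKernel n r y := by
  unfold heatKernel
  positivity

theorem heatKernel_zero {n : ℕ} (hn : 1 ≤ n) (y : EuclideanSpace ℝ (Fin n)) :
    heatKernel n 0 y = 0 := by
  have : -(n : ℝ) / 2 ≠ 0 := by
    have : (1 : ℝ) ≤ n := by exact_mod_cast hn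
    intro h
    linarith
  simp [heatKernel, zero_rpow this]

theorem measurable_heatKernel (n : ℕ) :
    Measurable fun q : ℝ × EuclideanSpace ℝ (Fin n) => heatKernel n q.1 q.2 := by
  unfold heatKernel
  fun_prop

theorem measurable_heatKernelDt (n : ℕ) :
    Measurable fun q : ℝ × EuclideanSpace ℝ (Fin n) => heatKernelDt n q.1 q.2 := by
  unfold heatKernelDt
  fun_prop

theorem hasDerivAt_heatKernel (n : ℕ) {r : ℝ} (hr : 0 < r) (y : EuclideanSpace ℝ (Fin n)) :
    HasDerivAt (fun r => heatKernel n r y) (heatKernelDt n r y) r := by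
  have h1 : HasDerivAt (fun r : ℝ => 2 * π * r) (2 * π) r := by
    simpa using (hasDerivAt_id r).const_mul (2 * π)
  have h2 := h1.rpow_const (p := -(n : ℝ) / 2) (Or.inl (by positivity))
  have h3 : HasDerivAt (fun r : ℝ => -‖y‖ ^ 2 / (2 * r)) (‖y‖ ^ 2 / (2 * r ^ 2)) r := by
    have := ((hasDerivAt_inv hr.ne').const_mul (-‖y‖ ^ 2 / 2))
    refine (this.congr_deriv ?_).congr_of_eventuallyEq (.of_forall fun z => ?_)
    · field_simp
    · simp only [div_eq_mul_inv, mul_inv]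
      ring
  refine (h2.mul h3.exp).congr_deriv ?_
  rw [rpow_sub_one (by positivity)]
  simp only [heatKernelDt]
  field_simp
  ring

theorem tendsto_heatKernel_zero (n : ℕ) {y : EuclideanSpace ℝ (Fin n)} (hy : y ≠ 0) :
    Tendsto (fun r => heatKernel n r y) (𝓝[>] 0) (𝓝 0) := by
  have hb : 0 < ‖y‖ ^ 2 / 2 := by positivity
  have h := ((tendsto_rpow_mul_exp_neg_mul_atTop_nhds_zero ((n : ℝ) / 2) _ hb).comp
    tendsto_inv_nhdsGT_zero).const_mul ((2 * π) ^ (-(n : ℝ) / 2))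
  rw [mul_zero] at h
  refine h.congr' ?_
  filter_upwards [self_mem_nhdsWithin] with r hr
  have hr : 0 < r := hr
  simp only [Function.comp, heatKernel]
  rw [mul_rpow (by positivity) hr.le, inv_rpow hr.le, ← rpow_neg hr.le, mul_assoc, neg_div]
  congr 3
  field_simp

theorem integral_abs_heatKernelDt_mul_norm (n : ℕ) {r : ℝ} (hr : 0 < r) :
    ∫ y, |heatKernelDt n r y| * ‖y‖ = (∫ y, |heatKernelDt n 1 y| * ‖y‖) * r ^ (-(1 / 2) : ℝ) := by
  rw [integral_abs_heatKernelDt_mul n hr]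
  simp only [norm_smul, norm_eq_abs, abs_of_nonneg (sqrt_nonneg r), mul_left_comm _ (√r),
    integral_const_mul]
  rw [← mul_assoc, mul_comm, rpow_neg hr.le, ← sqrt_eq_rpow]
  congr 1
  have := sq_sqrt hr.le
  have h0 : 0 < √r := by positivity
  field_simp
  exact this

theorem integrable_abs_heatKernelDt_mul_norm {n : ℕ} (hn : 1 ≤ n) {r : ℝ} (hr : 0 < r) :
    Integrable fun y : EuclideanSpace ℝ (Fin n) => |heatKernelDt n r y| * ‖y‖ := by
  refine (integrable_heatKernelDt_mul_norm_pow hn hr 1).abs.congr (ae_of_all _ fun y => ?_)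
  simp [abs_mul]

theorem integrableOn_rpow_neg_half (u : ℝ) :
    IntegrableOn (fun r : ℝ => r ^ (-(1 / 2) : ℝ)) (Ioc 0 u) := by
  rcases le_total 0 u with hu | hu
  · exact (intervalIntegrable_iff_integrableOn_Ioc_of_le hu).1
      (intervalIntegral.intervalIntegrable_rpow' (by norm_num))
  · simp [Ioc_eq_empty_of_le hu]

section LinearGrowth

variable {n : ℕ} {K : EuclideanSpace ℝ (Fin n) → ℝ} {L : ℝ}

theorem integrable_heatKernelDt_mul (hn : 1 ≤ n) (hK : Measurable K)
    (hL : ∀ y, |K y| ≤ L * ‖y‖) {r : ℝ} (hr : 0 < r) :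
    Integrable fun y => heatKernelDt n r y * K y := by
  refine ((integrable_abs_heatKernelDt_mul_norm hn hr).const_mul L).mono'
    (((measurable_heatKernelDt n).comp measurable_prodMk_left).mul hK).aestronglyMeasurable
    (ae_of_all _ fun y => ?_)
  rw [norm_mul, norm_eq_abs, norm_eq_abs, mul_left_comm]
  exact mul_le_mul_of_nonneg_left (hL y) (abs_nonneg _)

theorem integral_abs_heatKernelDt_mul_le (hn : 1 ≤ n) (hK : Measurable K)
    (hL : ∀ y, |K y| ≤ L * ‖y‖) {r : ℝ} (hr : 0 < r) :
    ∫ y, ‖heatKernelDt n r y * K y‖ ≤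
      (L * ∫ y, |heatKernelDt n 1 y| * ‖y‖) * r ^ (-(1 / 2) : ℝ) := by
  rw [mul_assoc, ← integral_abs_heatKernelDt_mul_norm n hr, ← integral_const_mul]
  refine integral_mono (integrable_heatKernelDt_mul hn hK hL hr).norm
    ((integrable_abs_heatKernelDt_mul_norm hn hr).const_mul L) fun y => ?_
  rw [norm_mul, norm_eq_abs, norm_eq_abs, mul_left_comm]
  exact mul_le_mul_of_nonneg_left (hL y) (abs_nonneg _)

theorem integrable_prod_heatKernelDt_mul (hn : 1 ≤ n) (hK : Measurable K)
    (hL : ∀ y, |K y| ≤ L * ‖y‖) (u : ℝ) :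
    Integrable (Function.uncurry fun r y => heatKernelDt n r y * K y)
      ((volume.restrict (Ioc 0 u)).prod volume) := by
  have hm : StronglyMeasurable (Function.uncurry fun r y => heatKernelDt n r y * K y) :=
    ((measurable_heatKernelDt n).mul (hK.comp measurable_snd)).stronglyMeasurable
  rw [integrable_prod_iff hm.aestronglyMeasurable]
  refine ⟨(ae_restrict_iff' measurableSet_Ioc).2 (ae_of_all _ fun r hr =>
    integrable_heatKernelDt_mul hn hK hL hr.1), ?_⟩
  refine ((integrableOn_rpow_neg_half u).const_mul
    (L * ∫ y : EuclideanSpace ℝ (Fin n), |heatKernelDt n 1 y| * ‖y‖)).mono'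
    hm.norm.integral_prod_right.aestronglyMeasurable
    ((ae_restrict_iff' measurableSet_Ioc).2 (ae_of_all _ fun r hr => ?_))
  rw [norm_of_nonneg (integral_nonneg fun _ => norm_nonneg _)]
  exact integral_abs_heatKernelDt_mul_le hn hK hL hr.1

theorem integral_integral_heatKernelDt_mul (hn : 1 ≤ n) (hK : Measurable K)
    (hL : ∀ y, |K y| ≤ L * ‖y‖) {u : ℝ} (hu : 0 < u) :
    ∫ r in (0 : ℝ)..u, ∫ y, heatKernelDt n r y * K y = ∫ y, heatKernel n u y * K y := by
  have : Nonempty (Fin n) := ⟨⟨0, hn⟩⟩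
  have hi := integrable_prod_heatKernelDt_mul hn hK hL u
  rw [intervalIntegral.integral_of_le hu.le, integral_integral_swap hi]
  refine integral_congr_ae ?_
  filter_upwards [hi.prod_left_ae, compl_mem_ae_iff.2 (measure_singleton 0)] with y hy hy0
  have hd : ∀ r ∈ Ioo 0 u, HasDerivAt (fun r => heatKernel n r y * K y)
      (heatKernelDt n r y * K y) r := fun r hr => (hasDerivAt_heatKernel n hr.1 y).mul_const _
  have h := intervalIntegral.integral_eq_sub_of_hasDerivAt_of_tendsto hu hd
    ((intervalIntegrable_iff_integrableOn_Ioc_of_le hu.le).2 hy)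
    ((tendsto_heatKernel_zero n hy0).mul_const _)
    (((hasDerivAt_heatKernel n hu y).continuousAt.tendsto.mono_left inf_le_left).mul_const _)
  rw [intervalIntegral.integral_of_le hu.le] at h
  simpa using h

end LinearGrowth

section Lipschitz

variable {n : ℕ} {φ : EuclideanSpace ℝ (Fin n) → ℝ} {B L : ℝ}

theorem convol_heatKernelDt_eq (hn : 1 ≤ n) (hφ : Continuous φ)
    (hL : ∀ x y, |φ x - φ y| ≤ L * ‖x - y‖) {r : ℝ} (hr : 0 < r)
    (η : EuclideanSpace ℝ (Fin n)) :
    convol (heatKernelDt n r) φ η = ∫ y, heatKernelDt n r y * (φ (η - y) - φ η) := by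
  have h0 := (integrable_heatKernelDt_mul_norm_pow hn hr 0).mul_const (φ η)
  simp only [pow_zero, mul_one] at h0
  have h1 := integrable_heatKernelDt_mul (K := fun y => φ (η - y) - φ η) (L := L) hn
    (by fun_prop) (fun y => by simpa using hL (η - y) η) hr
  have h2 := integral_add h1 h0
  rw [integral_mul_const, integral_heatKernelDt hn hr, zero_mul, add_zero] at h2
  rw [← h2, convol]
  congr 1
  ext y
  ring

theorem abs_convol_heatKernelDt_le (hn : 1 ≤ n) (hφ : Continuous φ)
    (hL : ∀ x y, |φ x - φ y| ≤ L * ‖x - y‖) {r : ℝ} (hr : 0 < r)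
    (η : EuclideanSpace ℝ (Fin n)) :
    |convol (heatKernelDt n r) φ η| ≤
      (L * ∫ y : EuclideanSpace ℝ (Fin n), |heatKernelDt n 1 y| * ‖y‖) * r ^ (-(1 / 2) : ℝ) := by
  rw [convol_heatKernelDt_eq hn hφ hL hr]
  exact (norm_integral_le_integral_norm _).trans
    (integral_abs_heatKernelDt_mul_le hn (by fun_prop) (fun y => by simpa using hL (η - y) η) hr)

theorem integrable_heatKernel_mul (hn : 1 ≤ n) {h : EuclideanSpace ℝ (Fin n) → ℝ}
    (hm : Measurable h) (hB : ∀ y, |h y| ≤ B) {r : ℝ} (hr : 0 < r) :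
    Integrable fun y => heatKernel n r y * h y := by
  have h0 := integrable_heatKernel_mul_norm_pow hn hr 0
  simp only [pow_zero, mul_one] at h0
  exact h0.mul_bdd hm.aestronglyMeasurable (ae_of_all _ hB)

theorem integral_convol_heatKernelDt (hn : 1 ≤ n) (hφ : Continuous φ) (hB : ∀ y, |φ y| ≤ B)
    (hL : ∀ x y, |φ x - φ y| ≤ L * ‖x - y‖) {u : ℝ} (hu : 0 < u)
    (η : EuclideanSpace ℝ (Fin n)) :
    ∫ r in (0 : ℝ)..u, convol (heatKernelDt n r) φ η = convol (heatKernel n u) φ η - φ η := by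
  have h := integral_integral_heatKernelDt_mul (K := fun y => φ (η - y) - φ η) (L := L) hn
    (by fun_prop) (fun y => by simpa using hL (η - y) η) hu
  have e : ∫ r in (0 : ℝ)..u, convol (heatKernelDt n r) φ η =
      ∫ r in (0 : ℝ)..u, ∫ y, heatKernelDt n r y * (φ (η - y) - φ η) := by
    simp only [intervalIntegral.integral_of_le hu.le]
    exact setIntegral_congr_fun measurableSet_Ioc fun r hr =>
      convol_heatKernelDt_eq hn hφ hL hr.1 η
  rw [e, h]
  simp only [mul_sub]
  rw [integral_sub (integrable_heatKernel_mul hn (by fun_prop) (fun y => hB (η - y)) hu)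
    (integrable_heatKernel_mul hn measurable_const (fun _ => hB η) hu), integral_mul_const,
    integral_heatKernel hu, one_mul, convol]

theorem measurable_convol_heatKernelDt (hφ : Continuous φ) :
    Measurable fun q : ℝ × EuclideanSpace ℝ (Fin n) => convol (heatKernelDt n q.1) φ q.2 := by
  have : StronglyMeasurable (Function.uncurry fun (q : ℝ × EuclideanSpace ℝ (Fin n))
      (y : EuclideanSpace ℝ (Fin n)) => heatKernelDt n q.1 y * φ (q.2 - y)) := by
    refine Measurable.stronglyMeasurable ?_
    exact ((measurable_heatKernelDt n).comp (by fun_prop :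
      Measurable fun a : (ℝ × EuclideanSpace ℝ (Fin n)) × EuclideanSpace ℝ (Fin n) =>
        (a.1.1, a.2))).mul (by fun_prop)
  exact this.integral_prod_right.measurable

end Lipschitz

/-! ### Weighted estimates -/

theorem integrable_heatKernel_mul_one_add_pow {n : ℕ} (hn : 1 ≤ n) {r : ℝ} (hr : 0 < r) (c : ℝ)
    (k : ℕ) :
    Integrable fun y : EuclideanSpace ℝ (Fin n) => heatKernel n r y * (1 + c * ‖y‖) ^ k := by
  simp only [add_comm (1 : ℝ), add_pow, one_pow, mul_one, Finset.mul_sum]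
  refine integrable_finsetSum _ fun i _ => ?_
  refine ((integrable_heatKernel_mul_norm_pow hn hr i).const_mul (c ^ i * k.choose i)).congr
    (ae_of_all _ fun y => ?_)
  simp only [mul_pow]
  ring

theorem inv_one_add_norm_sub_pow_le {E : Type*} [NormedAddCommGroup E] (k : ℕ) (x y : E) :
    ((1 + ‖x - y‖) ^ k)⁻¹ ≤ ((1 + ‖x‖) ^ k)⁻¹ * (1 + ‖y‖) ^ k := by
  rw [inv_mul_eq_div, inv_eq_one_div, div_le_div_iff₀ (by positivity) (by positivity), one_mul,
    ← mul_pow]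
  gcongr
  have : ‖x‖ ≤ ‖x - y‖ + ‖y‖ := by simpa using norm_add_le (x - y) y
  nlinarith [norm_nonneg y, norm_nonneg (x - y)]

theorem abs_convol_heatKernel_le {n : ℕ} (hn : 1 ≤ n) {T : ℝ} (hT : 0 < T) (k : ℕ) {A : ℝ}
    {h : EuclideanSpace ℝ (Fin n) → ℝ} (hh : ∀ y, |h y| ≤ A * ((1 + ‖y‖) ^ k)⁻¹) {r : ℝ}
    (hr : 0 ≤ r) (hrT : r ≤ T) (ξ : EuclideanSpace ℝ (Fin n)) :
    |convol (heatKernel n r) h ξ| ≤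
      A * (∫ y : EuclideanSpace ℝ (Fin n), heatKernel n 1 y * (1 + √T * ‖y‖) ^ k) *
        ((1 + ‖ξ‖) ^ k)⁻¹ := by
  have hA : 0 ≤ A := by simpa using (abs_nonneg _).trans (hh 0)
  have hM : ∀ y : EuclideanSpace ℝ (Fin n), 0 ≤ heatKernel n 1 y * (1 + √T * ‖y‖) ^ k :=
    fun y => mul_nonneg (heatKernel_nonneg n zero_le_one y) (by positivity)
  rcases hr.eq_or_lt with rfl | hr
  · have : 0 ≤ ∫ y : EuclideanSpace ℝ (Fin n), heatKernel n 1 y * (1 + √T * ‖y‖) ^ k :=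
      integral_nonneg hM
    simp only [convol, heatKernel_zero hn, zero_mul, integral_zero, abs_zero]
    positivity
  have hi := integrable_heatKernel_mul_one_add_pow hn hr 1 k
  simp only [one_mul] at hi
  have h1 : |convol (heatKernel n r) h ξ| ≤
      ∫ y, A * ((1 + ‖ξ‖) ^ k)⁻¹ * (heatKernel n r y * (1 + ‖y‖) ^ k) := by
    rw [← norm_eq_abs, convol]
    refine norm_integral_le_of_norm_le (hi.const_mul _) (ae_of_all _ fun y => ?_)
    have hg := heatKernel_nonneg n hr.le y
    rw [norm_mul, norm_eq_abs, norm_eq_abs, abs_of_nonneg hg]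
    calc heatKernel n r y * |h (ξ - y)|
        ≤ heatKernel n r y * (A * (((1 + ‖ξ‖) ^ k)⁻¹ * (1 + ‖y‖) ^ k)) := by
          gcongr
          exact (hh _).trans (by gcongr; exact inv_one_add_norm_sub_pow_le k ξ y)
      _ = _ := by ring
  refine h1.trans ?_
  rw [integral_const_mul, integral_heatKernel_mul n hr, mul_right_comm]
  refine mul_le_mul_of_nonneg_right (mul_le_mul_of_nonneg_left ?_ hA) (by positivity)
  refine integral_mono_of_nonneg (ae_of_all _ fun y => mul_nonneg
    (heatKernel_nonneg n zero_le_one y) (by positivity))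
    (integrable_heatKernel_mul_one_add_pow hn one_pos _ k) (ae_of_all _ fun y => ?_)
  simp only [norm_smul, norm_eq_abs, abs_of_nonneg (sqrt_nonneg r)]
  have := heatKernel_nonneg n zero_le_one y
  gcongr

theorem memLp_inv_one_add_norm_pow (n : ℕ) {p : ℝ} (hp : 1 ≤ p) :
    MemLp (fun y : EuclideanSpace ℝ (Fin n) => ((1 + ‖y‖) ^ (n + 1))⁻¹) (ENNReal.ofReal p) := by
  have hp0 : 0 < p := by linarith
  have hm : AEStronglyMeasurable (fun y : EuclideanSpace ℝ (Fin n) =>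
      ((1 + ‖y‖) ^ (n + 1))⁻¹) volume := by fun_prop
  rw [← integrable_norm_rpow_iff hm (by simpa using hp0) ENNReal.ofReal_ne_top,
    ENNReal.toReal_ofReal hp0.le]
  refine (integrable_one_add_norm (r := (n + 1) * p) ?_).congr (ae_of_all _ fun y => ?_)
  · rw [finrank_euclideanSpace_fin]
    nlinarith [n.cast_nonneg (α := ℝ)]
  · simp only
    have h1 : 0 ≤ 1 + ‖y‖ := by positivity
    rw [norm_of_nonneg (by positivity), ← rpow_natCast, ← rpow_neg h1, ← rpow_mul h1]
    congr 1
    push_cast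
    ring

theorem lintegral_eLpNorm_lt_top {α β : Type*} [MeasurableSpace α] [MeasurableSpace β]
    {μ : Measure α} {ν : Measure β} {S : Set α} (hS : MeasurableSet S) {q : ℝ≥0∞}
    {f : α → β → ℝ} {c : α → ℝ} {w : β → ℝ} (hc : IntegrableOn c S μ) (hw : MemLp w q ν)
    (hf : ∀ a ∈ S, ∀ b, |f a b| ≤ c a * w b) :
    ∫⁻ a in S, eLpNorm (f a) q ν ∂μ < ⊤ := by
  calc ∫⁻ a in S, eLpNorm (f a) q ν ∂μ
      ≤ ∫⁻ a in S, ‖c a‖ₑ * eLpNorm w q ν ∂μ := by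
        refine setLIntegral_mono' hS fun a ha => ?_
        rw [← eLpNorm_const_smul]
        exact eLpNorm_mono_real (hf a ha)
    _ = (∫⁻ a in S, ‖c a‖ₑ ∂μ) * eLpNorm w q ν := lintegral_mul_const' _ _ hw.2.ne
    _ < ⊤ := ENNReal.mul_lt_top hc.2 hw.2

theorem intervalIntegral_triangle_swap {s t : ℝ} (hst : s ≤ t) {H : ℝ → ℝ → ℝ}
    (hH : Integrable (Function.uncurry H)
      ((volume.restrict (Ioc s t)).prod (volume.restrict (Ioc s t)))) :
    ∫ v in s..t, ∫ u in s..v, H v u = ∫ u in s..t, ∫ v in u..t, H v u := by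
  have hm : MeasurableSet {q : ℝ × ℝ | q.2 ≤ q.1} := measurableSet_le measurable_snd measurable_fst
  have hi := hH.indicator hm
  have hsw := integral_integral_swap (f := fun v u => {q : ℝ × ℝ | q.2 ≤ q.1}.indicator
    (Function.uncurry H) (v, u)) hi
  rw [intervalIntegral.integral_of_le hst, intervalIntegral.integral_of_le hst]
  convert! hsw using 1
  · refine setIntegral_congr_fun measurableSet_Ioc fun v hv => ?_
    have e : (fun u => {q : ℝ × ℝ | q.2 ≤ q.1}.indicator (Function.uncurry H) (v, u)) =
        (Iic v).indicator (H v) := by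
      ext u
      simp [indicator, Function.uncurry]
    simp only [e]
    rw [setIntegral_indicator measurableSet_Iic, intervalIntegral.integral_of_le hv.1.le]
    congr 2
    ext u
    simp only [mem_Ioc, mem_inter_iff, mem_Iic]
    have := hv.2
    constructor
    · exact fun h => ⟨⟨h.1, h.2.trans this⟩, h.2⟩
    · exact fun h => ⟨h.1.1, h.2⟩
  · refine setIntegral_congr_fun measurableSet_Ioc fun u hu => ?_
    have e : (fun v => {q : ℝ × ℝ | q.2 ≤ q.1}.indicator (Function.uncurry H) (v, u)) =
        (Ici u).indicator (fun v => H v u) := by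
      ext v
      simp [indicator, Function.uncurry]
    simp only [e]
    rw [setIntegral_indicator measurableSet_Ici, intervalIntegral.integral_of_le hu.2,
      ← integral_Icc_eq_integral_Ioc]
    congr 2
    ext v
    simp only [mem_Icc, mem_Ioc, mem_inter_iff, mem_Ici]
    have := hu.1
    constructor
    · exact fun h => ⟨⟨this.trans_le h.1, h.2⟩, h.1⟩
    · exact fun h => ⟨h.2, h.1.2⟩

theorem integrableOn_sub_rpow_neg_half (s t : ℝ) :
    IntegrableOn (fun u : ℝ => (u - s) ^ (-(1 / 2) : ℝ)) (Ioc s t) := by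
  rcases le_total s t with h | h
  · have := (intervalIntegrable_iff_integrableOn_Ioc_of_le (sub_nonneg.2 h)).2
      (integrableOn_rpow_neg_half (t - s))
    have := this.comp_sub_right s
    rw [zero_add, sub_add_cancel] at this
    exact (intervalIntegrable_iff_integrableOn_Ioc_of_le h).1 this
  · simp [Ioc_eq_empty_of_le h]

section Mixed

variable {n : ℕ} {φ ψ : EuclideanSpace ℝ (Fin n) → ℝ} {B L P : ℝ}

theorem abs_convol_heatKernelDt_mul_le (hn : 1 ≤ n) (hφ : Continuous φ)
    (hL : ∀ x y, |φ x - φ y| ≤ L * ‖x - y‖) {k : ℕ} (hP : ∀ y, |ψ y| ≤ P * ((1 + ‖y‖) ^ k)⁻¹)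
    {r : ℝ} (hr : 0 < r) (η : EuclideanSpace ℝ (Fin n)) :
    |convol (heatKernelDt n r) φ η * ψ η| ≤
      (L * ∫ y : EuclideanSpace ℝ (Fin n), |heatKernelDt n 1 y| * ‖y‖) * r ^ (-(1 / 2) : ℝ) * P *
        ((1 + ‖η‖) ^ k)⁻¹ := by
  rw [abs_mul, mul_assoc _ P]
  have h := abs_convol_heatKernelDt_le hn hφ hL hr η
  exact mul_le_mul h (hP η) (abs_nonneg _) ((abs_nonneg _).trans h)

theorem convol_heatKernel_eq_intervalIntegral (hn : 1 ≤ n) (hφ : Continuous φ)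
    (hB : ∀ y, |φ y| ≤ B) (hL : ∀ x y, |φ x - φ y| ≤ L * ‖x - y‖) (hψ : Continuous ψ)
    (hP : ∀ y, |ψ y| ≤ P) {s v τ : ℝ} (hv : s < v) (hτ : 0 ≤ τ)
    (ξ : EuclideanSpace ℝ (Fin n)) :
    convol (heatKernel n τ) (fun η => (convol (heatKernel n (v - s)) φ η - φ η) * ψ η) ξ =
      ∫ u in s..v, convol (heatKernel n τ)
        (fun η => convol (heatKernelDt n (u - s)) φ η * ψ η) ξ := by
  rcases hτ.eq_or_lt with rfl | hτ
  · simp [convol, heatKernel_zero hn]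
  have hD : ∀ η, convol (heatKernel n (v - s)) φ η - φ η =
      ∫ u in s..v, convol (heatKernelDt n (u - s)) φ η := fun η => by
    rw [← integral_convol_heatKernelDt hn hφ hB hL (sub_pos.2 hv)]
    have := intervalIntegral.integral_comp_sub_right (a := s) (b := v)
      (fun r => convol (heatKernelDt n r) φ η) s
    rw [this, sub_self]
  have hi : Integrable (Function.uncurry fun (u : ℝ) (y : EuclideanSpace ℝ (Fin n)) =>
      heatKernel n τ y * (convol (heatKernelDt n (u - s)) φ (ξ - y) * ψ (ξ - y)))
      ((volume.restrict (Ioc s v)).prod volume) := by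
    have h0 := integrable_heatKernel_mul hn (h := fun _ => P) measurable_const
      (fun _ => le_rfl) hτ
    refine (((integrableOn_sub_rpow_neg_half s v).const_mul
      (L * ∫ y : EuclideanSpace ℝ (Fin n), |heatKernelDt n 1 y| * ‖y‖)).mul_prod h0).mono' ?_ ?_
    · refine Measurable.aestronglyMeasurable ?_
      refine ((measurable_heatKernel n).comp (by fun_prop :
        Measurable fun a : ℝ × EuclideanSpace ℝ (Fin n) => (τ, a.2))).mul
        (((measurable_convol_heatKernelDt hφ).comp (by fun_prop :
        Measurable fun a : ℝ × EuclideanSpace ℝ (Fin n) => (a.1 - s, ξ - a.2))).mul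
          (by fun_prop))
    · filter_upwards [Measure.quasiMeasurePreserving_fst.ae (ae_restrict_mem measurableSet_Ioc)]
        with a ha
      have hb := abs_convol_heatKernelDt_mul_le (k := 0) hn hφ hL (by simpa using hP)
        (sub_pos.2 ha.1) (ξ - a.2)
      have hg := heatKernel_nonneg n hτ.le a.2
      simp only [Function.uncurry, pow_zero, inv_one, mul_one] at hb ⊢
      rw [norm_mul, norm_of_nonneg hg, norm_eq_abs]
      calc _ ≤ _ := mul_le_mul_of_nonneg_left hb hg
        _ = _ := by ring
  rw [intervalIntegral.integral_of_le hv.le]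
  have e : ∀ h, convol (heatKernel n τ) h ξ = ∫ y, heatKernel n τ y * h (ξ - y) := fun _ => rfl
  simp only [e, hD]
  rw [integral_integral_swap hi]
  refine integral_congr_ae (ae_of_all _ fun y => ?_)
  simp only [intervalIntegral.integral_of_le hv.le, integral_const_mul, integral_mul_const]

theorem integrable_deriv_mul_convol (hn : 1 ≤ n) (hφ : Continuous φ)
    (hL : ∀ x y, |φ x - φ y| ≤ L * ‖x - y‖) (hψ : Continuous ψ)
    (hP : ∀ y, |ψ y| ≤ P) {s t X : ℝ} {f : ℝ → ℝ} (hf : Measurable f)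
    (hX : ∀ v ∈ Ioc s t, |f v| ≤ X) (ξ : EuclideanSpace ℝ (Fin n)) :
    Integrable (Function.uncurry fun v u => f v * convol (heatKernel n (t - v))
        (fun η => convol (heatKernelDt n (u - s)) φ η * ψ η) ξ)
      ((volume.restrict (Ioc s t)).prod (volume.restrict (Ioc s t))) := by
  have hm : StronglyMeasurable (Function.uncurry fun (q : ℝ × ℝ) (y : EuclideanSpace ℝ (Fin n)) =>
      heatKernel n (t - q.1) y *
        (convol (heatKernelDt n (q.2 - s)) φ (ξ - y) * ψ (ξ - y))) := by
    refine Measurable.stronglyMeasurable ?_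
    exact ((measurable_heatKernel n).comp (by fun_prop :
      Measurable fun a : (ℝ × ℝ) × EuclideanSpace ℝ (Fin n) => (t - a.1.1, a.2))).mul
      (((measurable_convol_heatKernelDt hφ).comp (by fun_prop :
      Measurable fun a : (ℝ × ℝ) × EuclideanSpace ℝ (Fin n) => (a.1.2 - s, ξ - a.2))).mul
        (by fun_prop))
  rcases le_or_gt t s with hst | hst
  · simp [Ioc_eq_empty_of_le hst]
  have hM : Measurable fun q : ℝ × ℝ => convol (heatKernel n (t - q.1))
      (fun η => convol (heatKernelDt n (q.2 - s)) φ η * ψ η) ξ := hm.integral_prod_right.measurable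
  have hbd := ((integrableOn_sub_rpow_neg_half s t).const_mul
    (X * ((L * ∫ y : EuclideanSpace ℝ (Fin n), |heatKernelDt n 1 y| * ‖y‖) * P *
      (∫ y : EuclideanSpace ℝ (Fin n), heatKernel n 1 y * (1 + √(t - s) * ‖y‖) ^ 0)))).comp_snd
    (volume.restrict (Ioc s t))
  refine hbd.mono' ((hf.comp measurable_fst).mul hM).aestronglyMeasurable ?_
  filter_upwards [Measure.quasiMeasurePreserving_fst.ae (ae_restrict_mem measurableSet_Ioc),
    Measure.quasiMeasurePreserving_snd.ae (ae_restrict_mem measurableSet_Ioc)] with a ha hb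
  have h1 := abs_convol_heatKernel_le hn (sub_pos.2 hst) 0 (abs_convol_heatKernelDt_mul_le hn hφ hL
    (k := 0) (by simpa using hP) (sub_pos.2 hb.1)) (sub_nonneg.2 ha.2)
    (sub_le_sub_left ha.1.le t) ξ
  simp only [Function.uncurry, norm_mul, norm_eq_abs]
  refine (mul_le_mul (hX _ ha) h1 (abs_nonneg _) ((abs_nonneg _).trans (hX _ ha))).trans_eq ?_
  simp only [pow_zero, inv_one, mul_one]
  ring

end Mixed

theorem SchwartzMap.exists_norm_sub_le {E : Type*} [NormedAddCommGroup E] [NormedSpace ℝ E]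
    (φ : SchwartzMap E ℝ) : ∃ L, ∀ x y, |φ x - φ y| ≤ L * ‖x - y‖ := by
  obtain ⟨L, -, hL⟩ := φ.decay 0 1
  refine ⟨L, fun x y => ?_⟩
  refine convex_univ.norm_image_sub_le_of_norm_fderiv_le (𝕜 := ℝ)
    (fun z _ => φ.differentiableAt) (fun z _ => ?_) (mem_univ y) (mem_univ x)
  simpa [norm_iteratedFDeriv_one] using hL z

theorem SchwartzMap.exists_abs_le_inv_one_add_norm_pow {E : Type*} [NormedAddCommGroup E]
    [NormedSpace ℝ E] (φ : SchwartzMap E ℝ) (k : ℕ) :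
    ∃ P, ∀ y, |φ y| ≤ P * ((1 + ‖y‖) ^ k)⁻¹ := by
  refine ⟨2 ^ k * (Finset.Iic (k, 0)).sup (fun m => SchwartzMap.seminorm ℝ m.1 m.2) φ,
    fun y => ?_⟩
  have h := SchwartzMap.one_add_le_sup_seminorm_apply (𝕜 := ℝ) (m := (k, 0)) le_rfl le_rfl φ y
  rw [← div_eq_mul_inv, le_div_iff₀ (by positivity), mul_comm]
  simpa using h

/-- integration by parts for the mixed operator `X^{xa}`.
For `x : [0,T] → ℝ` continuously differentiable and Schwartz functions `φ, ψ`,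
writing `X^x_{tu} χ = ∫_u^t x'(v)(g_{t-v} * χ) dv` (with `g_0 * χ = χ`), one has,
in `L^p(ℝ^n)`,
`∫_s^t x'(u) (g_{t-u} * [((g_{u-s} * φ) - φ) · ψ]) du
  = ∫_s^t X^x_{tu}((∂g_{u-s} * φ) · ψ) du`,
with pointwise products `·` on ℝ^n, all integrals being absolutely convergent
Bochner integrals in `L^p(ℝ^n)`. -/
theorem integration_by_parts_mixed_operator
    (n : ℕ) (hn : 1 ≤ n) (p : ℝ) (hp : 1 ≤ p) (T : ℝ) (hT : 0 < T)
    (x : ℝ → ℝ) (hx : ContDiff ℝ 1 x)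
    (φ ψ : SchwartzMap (EuclideanSpace ℝ (Fin n)) ℝ)
    (s t : ℝ) (hs : 0 ≤ s) (hst : s ≤ t) (ht : t ≤ T) :
    ((∫⁻ u in Set.Ioc s t,
        eLpNorm (fun ξ => deriv x u * convol (heatKernel n (t - u))
            (fun η => (convol (heatKernel n (u - s)) (⇑φ) η - φ η) * ψ η) ξ)
          (ENNReal.ofReal p) volume) < ⊤) ∧
    ((∫⁻ u in Set.Ioc s t,
        eLpNorm (fun ξ => ∫ v in u..t, deriv x v * convol (heatKernel n (t - v))
            (fun η => convol (heatKernelDt n (u - s)) (⇑φ) η * ψ η) ξ)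
          (ENNReal.ofReal p) volume) < ⊤) ∧
    (∀ ξ, (∫ u in s..t, deriv x u * convol (heatKernel n (t - u))
            (fun η => (convol (heatKernel n (u - s)) (⇑φ) η - φ η) * ψ η) ξ)
        = ∫ u in s..t, (∫ v in u..t, deriv x v * convol (heatKernel n (t - v))
            (fun η => convol (heatKernelDt n (u - s)) (⇑φ) η * ψ η) ξ)) := by
  obtain ⟨L, hL⟩ := φ.exists_norm_sub_le
  obtain ⟨B, hB⟩ := φ.exists_abs_le_inv_one_add_norm_pow 0
  obtain ⟨P, hP⟩ := ψ.exists_abs_le_inv_one_add_norm_pow (n + 1)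
  obtain ⟨Q, hQ⟩ := ψ.exists_abs_le_inv_one_add_norm_pow 0
  have hx' : Continuous (deriv x) := hx.continuous_deriv le_rfl
  obtain ⟨X, hX⟩ := isCompact_Icc.exists_bound_of_continuousOn (s := Icc s t) hx'.continuousOn
  have hX' : ∀ v ∈ Ioc s t, |deriv x v| ≤ X := fun v hv => hX v (Ioc_subset_Icc_self hv)
  have hw := memLp_inv_one_add_norm_pow n hp
  have hτ : ∀ v ∈ Ioc s t, 0 ≤ t - v ∧ t - v ≤ T := fun v hv =>
    ⟨sub_nonneg.2 hv.2, by linarith [hv.1]⟩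
  refine ⟨?_, ?_, fun ξ => ?_⟩
  · set C := (B * (∫ y : EuclideanSpace ℝ (Fin n), heatKernel n 1 y * (1 + √T * ‖y‖) ^ 0) + B) * P
    have hC : ∀ u ∈ Ioc s t, ∀ η,
        |(convol (heatKernel n (u - s)) φ η - φ η) * ψ η| ≤ C * ((1 + ‖η‖) ^ (n + 1))⁻¹ := by
      intro u hu η
      have h1 := abs_convol_heatKernel_le hn hT 0 hB (sub_nonneg.2 hu.1.le)
        (by linarith [hu.2]) η
      have h2 := hB η
      simp only [pow_zero, inv_one, mul_one] at h1 h2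
      have h3 : |convol (heatKernel n (u - s)) φ η - φ η| ≤
          B * (∫ y : EuclideanSpace ℝ (Fin n), heatKernel n 1 y * (1 + √T * ‖y‖) ^ 0) + B := by
        simp only [pow_zero, mul_one]
        exact (abs_sub _ _).trans (add_le_add h1 h2)
      rw [abs_mul, mul_assoc _ P]
      exact mul_le_mul h3 (hP η) (abs_nonneg _) ((abs_nonneg _).trans h3)
    refine lintegral_eLpNorm_lt_top measurableSet_Ioc (c := fun _ => X * (C *
      ∫ y : EuclideanSpace ℝ (Fin n), heatKernel n 1 y * (1 + √T * ‖y‖) ^ (n + 1)))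
      (integrableOn_const measure_Ioc_lt_top.ne) hw fun u hu ξ => ?_
    rw [abs_mul, mul_assoc]
    exact mul_le_mul (hX' u hu)
      (abs_convol_heatKernel_le hn hT _ (hC u hu) (hτ u hu).1 (hτ u hu).2 ξ)
      (abs_nonneg _) ((abs_nonneg _).trans (hX' u hu))
  · refine lintegral_eLpNorm_lt_top measurableSet_Ioc
      ((integrableOn_sub_rpow_neg_half s t).const_mul (X * (
        (L * ∫ y : EuclideanSpace ℝ (Fin n), |heatKernelDt n 1 y| * ‖y‖) * P *
        ∫ y : EuclideanSpace ℝ (Fin n), heatKernel n 1 y * (1 + √T * ‖y‖) ^ (n + 1)) * T))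
      hw fun u hu ξ => ?_
    have hbd : ∀ v ∈ Ioc s t, ‖deriv x v * convol (heatKernel n (t - v))
        (fun η => convol (heatKernelDt n (u - s)) φ η * ψ η) ξ‖ ≤
        X * ((L * ∫ y : EuclideanSpace ℝ (Fin n), |heatKernelDt n 1 y| * ‖y‖) *
          (u - s) ^ (-(1 / 2) : ℝ) * P *
          (∫ y : EuclideanSpace ℝ (Fin n), heatKernel n 1 y * (1 + √T * ‖y‖) ^ (n + 1)) *
          ((1 + ‖ξ‖) ^ (n + 1))⁻¹) := fun v hv => by
      rw [norm_mul]
      exact mul_le_mul (hX' v hv) (abs_convol_heatKernel_le hn hT _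
        (abs_convol_heatKernelDt_mul_le hn φ.continuous hL hP (sub_pos.2 hu.1))
        (hτ v hv).1 (hτ v hv).2 ξ) (abs_nonneg _) ((abs_nonneg _).trans (hX' v hv))
    have hI := intervalIntegral.norm_integral_le_of_norm_le_const (a := u) (b := t)
      fun v hv => hbd v (by
        rw [uIoc_of_le hu.2] at hv
        exact ⟨hu.1.trans hv.1, hv.2⟩)
    rw [← norm_eq_abs]
    refine (hI.trans (mul_le_mul_of_nonneg_left (b := |t - u|) (c := T) ?_
      ((norm_nonneg _).trans (hbd u hu)))).trans_eq (by ring)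
    rw [abs_of_nonneg (hτ u hu).1]
    exact (hτ u hu).2
  · simp only [pow_zero, inv_one, mul_one] at hB hQ
    rw [← intervalIntegral_triangle_swap hst (integrable_deriv_mul_convol hn φ.continuous hL
      ψ.continuous hQ hx'.measurable hX' ξ)]
    rw [intervalIntegral.integral_of_le hst, intervalIntegral.integral_of_le hst]
    refine setIntegral_congr_fun measurableSet_Ioc fun v hv => ?_
    simp only [intervalIntegral.integral_const_mul]
    rw [convol_heatKernel_eq_intervalIntegral hn φ.continuous hB hL ψ.continuous hQ hv.1
      (hτ v hv).1]
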